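/- Let γ_t denote the Gaussian probability measure on ℝ with mean 0 and variance t > 0. There exist constants C > 0 and A > 0 such that for every t > 0 and all θ₁, θ₂ with 0 ≤ θ₁ ≤ θ₂ ≤ 2π: | γ_t({x ∈ ℝ : ∃ k ∈ ℤ, θ₁ ≤ x − 2πk ≤ θ₂}) − (θ₂ − θ₁)/(2π) | ≤ C·exp(−A·t). -/

import Mathlib

open MeasureTheory ProbabilityTheory Filter Topology Real

lemma summable_exp_neg_mul_int_sq {c : ℝ} (hc : 0 < c) :
    Summable fun n : ℤ ↦ rexp (-c * (n : ℝ) ^ 2) := by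
  have h := (summable_jacobiTheta₂_term_iff 0 (Complex.I * (c / π : ℝ))).2
    (by simpa using div_pos hc pi_pos)
  rw [← Complex.summable_ofReal]
  refine h.congr fun n ↦ ?_
  have hpi : (π : ℂ) ≠ 0 := by exact_mod_cast pi_ne_zero
  simp only [jacobiTheta₂_term]
  push_cast
  congr 1
  field_simp
  linear_combination (c : ℂ) * n ^ 2 * Complex.I_sq

lemma summable_gaussianPDFReal_add_two_pi {t : NNReal} (ht : 0 < t) (x : ℝ) :
    Summable fun k : ℤ ↦ gaussianPDFReal 0 t (x + 2 * π * k) := by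
  have ht' : (0 : ℝ) < t := ht
  have htc : ((t : ℝ) : ℂ) ≠ 0 := by exact_mod_cast ht'.ne'
  have h := (summable_jacobiTheta₂_term_iff (Complex.I * (x / t : ℝ))
    (Complex.I * (2 * π / t : ℝ))).2 (by simpa using by positivity)
  rw [← Complex.summable_ofReal]
  refine (h.mul_left (((√(2 * π * t))⁻¹ * rexp (-x ^ 2 / (2 * t)) : ℝ) : ℂ)).congr fun n ↦ ?_
  simp only [jacobiTheta₂_term, gaussianPDFReal]
  push_cast
  rw [mul_assoc, ← Complex.exp_add]
  congr 2
  field_simp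
  linear_combination (4 * π * n * x + 4 * π ^ 2 * n ^ 2 : ℂ) * Complex.I_sq

/-- Poisson summation for the Gaussian density: the density of the wrapped Gaussian on the circle
is given by its Fourier series. -/
lemma ofReal_tsum_gaussianPDFReal_add_two_pi {t : NNReal} (ht : 0 < t) (x : ℝ) :
    ((∑' k : ℤ, gaussianPDFReal 0 t (x + 2 * π * k) : ℝ) : ℂ) =
      1 / (2 * π) * ∑' n : ℤ, Complex.exp (-(t / 2) * n ^ 2 - Complex.I * x * n) := by
  have ht' : (0 : ℝ) < t := ht
  have htc : ((t : ℝ) : ℂ) ≠ 0 := by exact_mod_cast ht'.ne'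
  have hpi : (π : ℂ) ≠ 0 := by exact_mod_cast pi_ne_zero
  have ha : 0 < t / (2 * π) := by positivity
  have h := Complex.tsum_exp_neg_quadratic (a := (t / (2 * π) : ℝ))
    (by simpa only [Complex.ofReal_re] using ha) (-Complex.I * x / (2 * π))
  have hsqrt : (((t / (2 * π) : ℝ) : ℂ) ^ (1 / 2 : ℂ)) = (√(t / (2 * π)) : ℝ) := by
    rw [sqrt_eq_rpow, Complex.ofReal_cpow ha.le]
    norm_num
  have hc : (1 / (2 * π) : ℝ) * (1 / √(t / (2 * π))) = (√(2 * π * t))⁻¹ := by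
    have h1 : t / (2 * π) = 2 * π * t / (2 * π) ^ 2 := by field_simp
    rw [h1, sqrt_div' _ (by positivity), sqrt_sq (by positivity)]
    have h2 : √(2 * π * t) ≠ 0 := by positivity
    field_simp
  have hl : ∀ n : ℤ, Complex.exp (-(t / 2) * n ^ 2 - Complex.I * x * n) =
      Complex.exp (-π * (t / (2 * π) : ℝ) * n ^ 2 + 2 * π * (-Complex.I * x / (2 * π)) * n) := by
    intro n
    congr 1
    push_cast
    field_simp
    ring
  rw [tsum_congr hl, h, hsqrt, ← mul_assoc, Complex.ofReal_tsum, ← tsum_mul_left]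
  refine tsum_congr fun n ↦ ?_
  have hc' : (1 / (2 * π) : ℂ) * (1 / (√(t / (2 * π)) : ℝ)) = ((√(2 * π * t))⁻¹ : ℝ) := by
    rw [← hc]; push_cast; rfl
  rw [hc', gaussianPDFReal]
  push_cast
  congr 2
  field_simp
  ring_nf
  simp only [Complex.I_sq, show Complex.I ^ 4 = 1 from Complex.I_pow_four]
  ring

lemma abs_tsum_gaussianPDFReal_sub_le {t : NNReal} (ht : 1 ≤ t) (x : ℝ) :
    |(∑' k : ℤ, gaussianPDFReal 0 t (x + 2 * π * k)) - 1 / (2 * π)| ≤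
      1 / (2 * π) * (rexp (1 / 2) * ∑' n : ℤ, rexp (-(1 / 2) * (n : ℝ) ^ 2)) *
        rexp (-(1 / 2) * t) := by
  have ht' : (1 : ℝ) ≤ t := ht
  set f : ℤ → ℂ := fun n ↦ Complex.exp (-(t / 2) * n ^ 2 - Complex.I * x * n) with hf
  have hnorm : ∀ n, ‖f n‖ = rexp (-(t / 2) * (n : ℝ) ^ 2) := by
    intro n
    rw [hf, Complex.norm_exp]
    congr 1
    rw [show (-((t : ℝ) / 2) * n ^ 2 - Complex.I * x * n : ℂ) =
      ((-(t / 2) * (n : ℝ) ^ 2 : ℝ) : ℂ) + ((-(x * n) : ℝ) : ℂ) * Complex.I by push_cast; ring]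
    rw [Complex.add_re, Complex.re_ofReal_mul, Complex.ofReal_re, Complex.I_re, mul_zero, add_zero]
  have hs : Summable f := Summable.of_norm <| by
    simp_rw [hnorm]
    exact summable_exp_neg_mul_int_sq (by positivity)
  have hg := (summable_exp_neg_mul_int_sq (c := 1 / 2) (by norm_num)).mul_left
    (rexp (1 / 2) * rexp (-(1 / 2) * t))
  have h0 : f 0 = 1 := by simp [hf]
  have hsplit := hs.tsum_eq_add_tsum_ite 0
  have hle : ‖∑' n, (if n = 0 then 0 else f n)‖ ≤
      ∑' n : ℤ, rexp (1 / 2) * rexp (-(1 / 2) * t) * rexp (-(1 / 2) * (n : ℝ) ^ 2) := by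
    refine tsum_of_norm_bounded hg.hasSum fun n ↦ ?_
    split_ifs with hn
    · simp only [norm_zero]; positivity
    · rw [hnorm, ← exp_add, ← exp_add, exp_le_exp]
      have : (1 : ℝ) ≤ (n : ℝ) ^ 2 := by
        have : 1 ≤ n ^ 2 := by have := sq_pos_of_ne_zero hn; omega
        exact_mod_cast this
      nlinarith
  rw [tsum_mul_left] at hle
  have hkey : (((∑' k : ℤ, gaussianPDFReal 0 t (x + 2 * π * k)) - 1 / (2 * π) : ℝ) : ℂ) =
      (1 / (2 * π) : ℝ) * ∑' n, (if n = 0 then 0 else f n) := by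
    rw [Complex.ofReal_sub, ofReal_tsum_gaussianPDFReal_add_two_pi (by positivity) x, hsplit, h0]
    push_cast
    ring
  rw [← Real.norm_eq_abs, ← Complex.norm_real, hkey, norm_mul, Complex.norm_real,
    Real.norm_of_nonneg (by positivity), mul_assoc, mul_right_comm (rexp (1 / 2))]
  gcongr

/-- The Gaussian measure of a periodised arc is the integral over the arc of the wrapped density. -/
lemma gaussianReal_arc_eq_lintegral {t : NNReal} (ht : 0 < t) {θ₁ θ₂ : ℝ}
    (h : θ₂ ≤ θ₁ + 2 * π) :
    gaussianReal 0 t {x : ℝ | ∃ k : ℤ, θ₁ ≤ x - 2 * π * k ∧ x - 2 * π * k ≤ θ₂} =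
      ∫⁻ x in Set.Ioo θ₁ θ₂,
        ENNReal.ofReal (∑' k : ℤ, gaussianPDFReal 0 t (x + 2 * π * k)) := by
  have hset : {x : ℝ | ∃ k : ℤ, θ₁ ≤ x - 2 * π * k ∧ x - 2 * π * k ≤ θ₂} =
      ⋃ k : ℤ, (fun x ↦ x - 2 * π * k) ⁻¹' Set.Icc θ₁ θ₂ := by
    ext x
    simp only [Set.mem_ofPred_eq, Set.mem_iUnion, Set.mem_preimage, Set.mem_Icc]
  have hae : (⋃ k : ℤ, (fun x : ℝ ↦ x - 2 * π * k) ⁻¹' Set.Icc θ₁ θ₂) =ᵐ[volume]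
      ⋃ k : ℤ, (fun x ↦ x - 2 * π * k) ⁻¹' Set.Ioo θ₁ θ₂ := by
    refine Filter.EventuallyEq.countable_iUnion fun k ↦ ?_
    exact (measurePreserving_sub_right volume (2 * π * k)).quasiMeasurePreserving.preimage_ae_eq
      Ioo_ae_eq_Icc.symm
  have hdisj : Pairwise (Function.onFun Disjoint
      fun k : ℤ ↦ (fun x : ℝ ↦ x - 2 * π * k) ⁻¹' Set.Ioo θ₁ θ₂) := by
    intro j k hjk
    refine Set.disjoint_left.2 fun x hj hk ↦ hjk ?_
    simp only [Set.mem_preimage, Set.mem_Ioo] at hj hk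
    have h1 : (j : ℝ) - k < 1 := by nlinarith [pi_pos]
    have h2 : (k : ℝ) - j < 1 := by nlinarith [pi_pos]
    have h1' : j - k < 1 := by exact_mod_cast h1
    have h2' : k - j < 1 := by exact_mod_cast h2
    omega
  rw [gaussianReal_apply 0 ht.ne', hset, setLIntegral_congr hae,
    lintegral_iUnion (fun k ↦ measurableSet_Ioo.preimage (by fun_prop)) hdisj]
  simp_rw [ENNReal.ofReal_tsum_of_nonneg (fun k : ℤ ↦ gaussianPDFReal_nonneg 0 t _)
    (summable_gaussianPDFReal_add_two_pi ht _)]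
  rw [lintegral_tsum fun k ↦ by fun_prop]
  refine tsum_congr fun k ↦ ?_
  rw [← (measurePreserving_sub_right volume (2 * π * (k : ℝ))).setLIntegral_comp_preimage
    measurableSet_Ioo (by fun_prop)]
  simp [gaussianPDF]

/-- exponential equidistribution modulo 2π of the centered Gaussian
measure with variance t, uniformly over arcs [θ₁, θ₂] ⊆ [0, 2π]. -/
theorem gaussian_mod_two_pi_equidistribution :
    ∃ C > (0:ℝ), ∃ A > (0:ℝ), ∀ t : NNReal, 0 < t →
      ∀ θ₁ θ₂ : ℝ, 0 ≤ θ₁ → θ₁ ≤ θ₂ → θ₂ ≤ 2 * π →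
        |(gaussianReal 0 t {x : ℝ | ∃ k : ℤ,
            θ₁ ≤ x - 2 * π * k ∧ x - 2 * π * k ≤ θ₂}).toReal -
          (θ₂ - θ₁) / (2 * π)| ≤ C * Real.exp (-A * t) := by
  set D := rexp (1 / 2) * ∑' n : ℤ, rexp (-(1 / 2) * (n : ℝ) ^ 2) with hD
  have hD0 : 0 ≤ D := mul_nonneg (by positivity) (tsum_nonneg fun _ ↦ by positivity)
  have hpi := pi_pos
  refine ⟨D + rexp (1 / 2), by positivity, 1 / 2, by norm_num, fun t ht θ₁ θ₂ h0 h12 h2 ↦ ?_⟩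
  have hq0 : 0 ≤ (θ₂ - θ₁) / (2 * π) := div_nonneg (by linarith) (by positivity)
  have hq1 : (θ₂ - θ₁) / (2 * π) ≤ 1 := (div_le_one (by positivity)).2 (by linarith)
  rw [add_mul]
  rcases lt_or_ge t 1 with h1 | h1
  · have h1' : (t : ℝ) < 1 := h1
    have hp1 : (gaussianReal 0 t {x : ℝ | ∃ k : ℤ,
        θ₁ ≤ x - 2 * π * k ∧ x - 2 * π * k ≤ θ₂}).toReal ≤ 1 := measureReal_le_one
    have hexp : 1 ≤ rexp (1 / 2) * rexp (-(1 / 2) * t) := by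
      rw [← exp_add, one_le_exp_iff]
      linarith
    have : 0 ≤ D * rexp (-(1 / 2) * t) := by positivity
    refine (abs_sub_le_of_nonneg_of_le ENNReal.toReal_nonneg hp1 hq0 hq1).trans (by linarith)
  · have hbound := abs_tsum_gaussianPDFReal_sub_le h1
    rw [← hD] at hbound
    rw [gaussianReal_arc_eq_lintegral ht (by linarith)]
    set p : ℝ → ℝ := fun x ↦ ∑' k : ℤ, gaussianPDFReal 0 t (x + 2 * π * k) with hp
    set ε := 1 / (2 * π) * D * rexp (-(1 / 2) * t) with hε
    have hε0 : 0 ≤ ε := by positivity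
    have hle : 0 ≤ θ₂ - θ₁ := by linarith
    have hconst : ∀ c : ℝ, ∫⁻ _ in Set.Ioo θ₁ θ₂, ENNReal.ofReal c =
        ENNReal.ofReal (c * (θ₂ - θ₁)) := fun c ↦ by
      rw [setLIntegral_const, Real.volume_Ioo, ENNReal.ofReal_mul' hle]
    have hup : ∫⁻ x in Set.Ioo θ₁ θ₂, ENNReal.ofReal (p x) ≤
        ENNReal.ofReal ((1 / (2 * π) + ε) * (θ₂ - θ₁)) := by
      rw [← hconst]
      refine lintegral_mono fun x ↦ ENNReal.ofReal_le_ofReal ?_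
      linarith [(abs_le.1 (hbound x)).2]
    have hlow : ENNReal.ofReal ((1 / (2 * π) - ε) * (θ₂ - θ₁)) ≤
        ∫⁻ x in Set.Ioo θ₁ θ₂, ENNReal.ofReal (p x) := by
      rw [← hconst]
      refine lintegral_mono fun x ↦ ENNReal.ofReal_le_ofReal ?_
      linarith [(abs_le.1 (hbound x)).1]
    have hup' := ENNReal.toReal_le_of_le_ofReal (by positivity) hup
    have hlow' := (ENNReal.ofReal_le_iff_le_toReal (hup.trans_lt ENNReal.ofReal_lt_top).ne).1 hlow
    have hεθ : ε * (θ₂ - θ₁) ≤ D * rexp (-(1 / 2) * t) := by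
      calc ε * (θ₂ - θ₁) = D * rexp (-(1 / 2) * t) * ((θ₂ - θ₁) / (2 * π)) := by rw [hε]; ring
        _ ≤ _ := mul_le_of_le_one_right (by positivity) hq1
    have heq : (θ₂ - θ₁) / (2 * π) = 1 / (2 * π) * (θ₂ - θ₁) := by ring
    have hexp : 0 ≤ rexp (1 / 2) * rexp (-(1 / 2) * t) := by positivity
    rw [abs_le]
    constructor <;> linarith
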